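/- Let T and D be the permutations of ℝ given by T(x) = x + 1 and D(x) = 2x. Then the subgroup of the permutation group of ℝ generated by T and D is isomorphic to the Baumslag–Solitar group BS(1, 2), namely the group presented by two generators a, b with the single relation b·a·b⁻¹ = a². -/

import Mathlib

/-- Translation of the time line by one time-unit: `T x = x + 1`. -/
def T18 : Equiv.Perm ℝ := Equiv.addRight (1 : ℝ)

/-- Dilation of the time line by a factor 2: `D x = 2 * x`. -/
noncomputable def D18 : Equiv.Perm ℝ := Equiv.mulLeft₀ (2 : ℝ) two_ne_zero

/-- The relator `b * a * b⁻¹ * a⁻²` of the Baumslag–Solitar group `BS(1, 2)` in the free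
group on two generators (`a` is generator `0`, `b` is generator `1`). -/
def BS12rels : Set (FreeGroup (Fin 2)) :=
  {FreeGroup.of 1 * FreeGroup.of 0 * (FreeGroup.of 1)⁻¹ * (FreeGroup.of 0)⁻¹ *
    (FreeGroup.of 0)⁻¹}

theorem conj18 {G : Type*} [Group G] {a b : G} (h : b * a * b⁻¹ = a ^ (2:ℤ)) (m : ℕ) (e : ℤ) :
    b ^ m * a ^ e * (b ^ m)⁻¹ = a ^ (e * 2 ^ m) := by
  induction m with
  | zero => simp
  | succ m ih =>
    have h2 : ∀ k : ℤ, b * a ^ k * b⁻¹ = a ^ (k * 2) := by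
      intro k
      rw [← conj_zpow, h, ← zpow_mul, mul_comm]
    calc b ^ (m+1) * a ^ e * (b ^ (m+1))⁻¹ = b * (b ^ m * a ^ e * (b ^ m)⁻¹) * b⁻¹ := by
          rw [pow_succ']; group
      _ = _ := by rw [ih, h2, pow_succ, mul_assoc]

theorem form18 {G : Type*} [Group G] {a b : G} (h : b * a * b⁻¹ = a ^ (2:ℤ))
    (x : G) (hx : x ∈ Subgroup.closure {a, b}) :
    ∃ (m n : ℕ) (k : ℤ), x = (b ^ m)⁻¹ * (a ^ k * b ^ n) := by
  have ha : ∀ (e : ℤ) (y : G), (∃ (m n : ℕ) (k : ℤ), y = (b ^ m)⁻¹ * (a ^ k * b ^ n)) →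
      ∃ (m n : ℕ) (k : ℤ), a ^ e * y = (b ^ m)⁻¹ * (a ^ k * b ^ n) := by
    rintro e y ⟨m, n, k, rfl⟩
    refine ⟨m, n, e * 2 ^ m + k, ?_⟩
    rw [zpow_add, ← conj18 h m e]
    group
  induction hx using Subgroup.closure_induction_left with
  | one => exact ⟨0, 0, 0, by simp⟩
  | mul_left g hg y _ ih =>
    rcases hg with rfl | rfl
    · simpa using ha 1 y ih
    · obtain ⟨m, n, k, rfl⟩ := ih
      cases m with
      | zero =>
        refine ⟨0, n + 1, k * 2, ?_⟩
        have := conj18 h 1 k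
        simp only [pow_one] at this
        rw [← this, pow_succ']
        simp [mul_assoc]
      | succ m => exact ⟨m, n, k, by rw [pow_succ]; simp [mul_assoc]⟩
  | inv_mul_cancel g hg y _ ih =>
    rcases hg with rfl | rfl
    · simpa using ha (-1) y ih
    · obtain ⟨m, n, k, rfl⟩ := ih
      exact ⟨m + 1, n, k, by rw [pow_succ]; simp [mul_assoc]⟩

theorem Tz18 (k : ℤ) (x : ℝ) : (T18 ^ k) x = x + k := by
  simp [T18]

theorem Dn18 (n : ℕ) (x : ℝ) : (D18 ^ n) x = 2 ^ n * x := by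
  induction n with
  | zero => simp
  | succ n ih =>
    rw [pow_succ', Equiv.Perm.mul_apply, ih, pow_succ']
    simp [D18, mul_assoc]

theorem rel18 : ∀ r ∈ BS12rels, FreeGroup.lift ![T18, D18] r = 1 := by
  intro r hr
  rw [BS12rels, Set.mem_singleton_iff] at hr
  subst hr
  simp only [map_mul, map_inv, FreeGroup.lift_apply_of, Matrix.cons_val_zero, Matrix.cons_val_one]
  rw [mul_inv_eq_one, mul_inv_eq_iff_eq_mul, mul_inv_eq_iff_eq_mul]
  ext x
  simp only [Equiv.Perm.mul_apply, T18, D18, Equiv.coe_addRight, Equiv.mulLeft₀_apply]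
  ring

theorem bsrel18 : (PresentedGroup.of 1 * PresentedGroup.of 0 * (PresentedGroup.of 1)⁻¹ :
    PresentedGroup BS12rels) = PresentedGroup.of 0 ^ (2:ℤ) := by
  have h : PresentedGroup.mk BS12rels (FreeGroup.of 1 * FreeGroup.of 0 * (FreeGroup.of 1)⁻¹ *
      (FreeGroup.of 0)⁻¹ * (FreeGroup.of 0)⁻¹) = 1 :=
    PresentedGroup.one_of_mem (by simp [BS12rels])
  simp only [map_mul, map_inv] at h
  rw [mul_inv_eq_one, mul_inv_eq_iff_eq_mul] at h
  rw [zpow_two]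
  exact h

/-- The subgroup of `Equiv.Perm ℝ` generated by the translation `T x = x + 1`
and the dilation `D x = 2x` is isomorphic to the Baumslag–Solitar group
`BS(1, 2) = ⟨a, b | b a b⁻¹ = a²⟩`. -/
theorem stmt18 :
    Nonempty (↥(Subgroup.closure {T18, D18}) ≃* PresentedGroup BS12rels) := by
  have hr2 : ∀ {X : Type} (f : Fin 2 → X), Set.range f = {f 0, f 1} := by
    intro X f
    ext y
    simp [Fin.exists_fin_two, eq_comm]
  let φ : PresentedGroup BS12rels →* Equiv.Perm ℝ := PresentedGroup.toGroup rel18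
  have h0 : φ (PresentedGroup.of 0) = T18 := PresentedGroup.toGroup.of rel18
  have h1 : φ (PresentedGroup.of 1) = D18 := PresentedGroup.toGroup.of rel18
  have hcl := PresentedGroup.closure_range_of BS12rels
  rw [hr2] at hcl
  have hrange : φ.range = Subgroup.closure {T18, D18} := by
    rw [MonoidHom.range_eq_map, ← hcl, MonoidHom.map_closure, Set.image_pair, h0, h1]
  have hinj : Function.Injective φ := by
    rw [injective_iff_map_eq_one]
    intro x hx
    obtain ⟨m, n, k, rfl⟩ := form18 bsrel18 x (by rw [hcl]; trivial)
    rw [map_mul, map_inv, inv_mul_eq_one] at hx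
    simp only [map_mul, map_pow, map_zpow, h0, h1] at hx
    have e0 := congrArg (fun p : Equiv.Perm ℝ => p 0) hx
    have e1 := congrArg (fun p : Equiv.Perm ℝ => p 1) hx
    simp only [Equiv.Perm.mul_apply, Dn18, Tz18] at e0 e1
    have hk : k = 0 := by
      have : (k : ℝ) = 0 := by linarith
      exact_mod_cast this
    subst hk
    have hmn : m = n := by
      have : (2 : ℝ) ^ m = 2 ^ n := by simpa using e1
      exact pow_right_injective₀ (by norm_num) (by norm_num) this
    subst hmn
    simp
  exact ⟨((MonoidHom.ofInjective hinj).trans (MulEquiv.subgroupCongr hrange)).symm⟩
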